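/- arXiv:2205.04629 — 2 statements merged into one kernel-verified Lean document; each statement's English description precedes it below -/
import Mathlib

section
/- For every n ≥ 1 and every 1 ≤ m ≤ n, the function g_m(k) := (σ_m(k))^{1/m} is concave on the convex cone Γ_m: for all k, k′ ∈ Γ_m and all θ ∈ [0,1], g_m(θk + (1−θ)k′) ≥ θ g_m(k) + (1−θ) g_m(k′). -/
/-!
The proof follows Marcus and Lopes. Write `q_m = σ_m / σ_{m-1}` and `x|i` for the vector `x` with
its `i`-th coordinate replaced by `0`, so that `σ_j(x|i)` is the elementary symmetric function in
the remaining variables. From `σ_{j+1}(x) = σ_{j+1}(x|i) + x_i σ_j(x|i)` and Euler's identity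
`∑ x_i σ_j(x|i) = (j+1) σ_{j+1}(x)` one obtains

`(m+1) q_{m+1}(x) = ∑ i, (x_i - x_i² / (x_i + q_m(x|i)))`.

As `(a, b) ↦ a² / b` is convex, and decreasing in `b > 0`, concavity of `q_m` on `Γ_{m-1}` yields
concavity of `q_{m+1}` on `Γ_m`, provided `x ∈ Γ_m` implies `x|i ∈ Γ_{m-1}`. Convexity of
`Γ_m = {x ∈ Γ_{m-1} | q_m(x) > 0}` comes for free.

The deletion property is proved in the same induction (`concaveOn_and_delete`), without Newton's
inequalities: a concave function homogeneous of degree one is superadditive, so `q_m` is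
nondecreasing along each coordinate direction on `Γ_m`. Since `σ_m` and `σ_{m-1}` are affine in
`x_i`, comparing slopes gives `σ_{m-1}(x|i) ≥ q_m(x) σ_{m-2}(x|i) > 0`.

Finally `σ_m = q_1 ⋯ q_m` on `Γ_m`, so `σ_m^{1/m}` is a geometric mean of positive concave
functions, which is concave because the geometric mean is monotone and superadditive.
-/

/-- The j-th elementary symmetric function of k = (k₁, …, k_n) ∈ ℝⁿ. -/
noncomputable def esymm (n j : ℕ) (k : Fin n → ℝ) : ℝ :=
  ∑ s ∈ Finset.powersetCard j (Finset.univ : Finset (Fin n)), ∏ i ∈ s, k i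

/-- The cone Γ_m := {k ∈ ℝⁿ : σ_j(k) > 0 for all 1 ≤ j ≤ m}. -/
def GammaCone (n m : ℕ) : Set (Fin n → ℝ) :=
  {k | ∀ j, 1 ≤ j → j ≤ m → 0 < esymm n j k}

/-! ### Algebraic identities for elementary symmetric functions -/

lemma esymm_zero (n : ℕ) (x : Fin n → ℝ) : esymm n 0 x = 1 := by
  simp [esymm]

lemma prod_update_zero {n : ℕ} (x : Fin n → ℝ) (i : Fin n) (s : Finset (Fin n)) :
    ∏ l ∈ s, Function.update x i 0 l = if i ∈ s then 0 else ∏ l ∈ s, x l := by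
  split_ifs with h
  · exact Finset.prod_eq_zero h (by simp)
  · refine Finset.prod_congr rfl fun l hl => ?_
    rw [Function.update_of_ne]
    rintro rfl
    exact h hl

lemma esymm_update_zero {n : ℕ} (j : ℕ) (x : Fin n → ℝ) (i : Fin n) :
    esymm n j (Function.update x i 0) =
      ∑ s ∈ Finset.powersetCard j (Finset.univ.erase i), ∏ l ∈ s, x l := by
  unfold esymm
  symm
  refine Finset.sum_subset_zero_on_sdiff
    (Finset.powersetCard_mono (Finset.erase_subset _ _)) ?_ ?_
  · intro s hs
    rw [prod_update_zero, if_pos]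
    by_contra h
    simp only [Finset.mem_sdiff, Finset.mem_powersetCard, Finset.subset_univ, true_and] at hs
    exact hs.2 ⟨fun l hl => Finset.mem_erase.2 ⟨fun e => h (e ▸ hl), Finset.mem_univ _⟩, hs.1⟩
  · intro s hs
    rw [prod_update_zero, if_neg]
    intro h
    have := (Finset.mem_powersetCard.1 hs).1 h
    simp at this

lemma esymm_succ_eq {n : ℕ} (j : ℕ) (x : Fin n → ℝ) (i : Fin n) :
    esymm n (j + 1) x = esymm n (j + 1) (Function.update x i 0)
      + x i * esymm n j (Function.update x i 0) := by
  rw [esymm_update_zero, esymm_update_zero, esymm]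
  conv_lhs => rw [← Finset.insert_erase (Finset.mem_univ i)]
  rw [Finset.powersetCard_succ_insert (Finset.notMem_erase _ _), Finset.sum_union, Finset.sum_image,
    Finset.mul_sum]
  · congr 1
    refine Finset.sum_congr rfl fun s hs => Finset.prod_insert fun h => ?_
    have := (Finset.mem_powersetCard.1 hs).1 h
    simp at this
  · intro s hs t ht hst
    have hs' : i ∉ s := fun h => by simpa using (Finset.mem_powersetCard.1 hs).1 h
    have ht' : i ∉ t := fun h => by simpa using (Finset.mem_powersetCard.1 ht).1 h
    rw [← Finset.erase_insert hs', ← Finset.erase_insert ht']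
    exact congrArg (fun u => u.erase i) hst
  · rw [Finset.disjoint_left]
    intro s hs hs'
    obtain ⟨t, _, rfl⟩ := Finset.mem_image.1 hs'
    have := (Finset.mem_powersetCard.1 hs).1 (Finset.mem_insert_self i t)
    simp at this

/-- Euler's identity for `σ_{j+1}`, whose `i`-th partial derivative at `x` is `σ_j` of `x` with
the `i`-th coordinate deleted. -/
lemma sum_mul_esymm {n : ℕ} (j : ℕ) (x : Fin n → ℝ) :
    ∑ i, x i * esymm n j (Function.update x i 0) = (j + 1) * esymm n (j + 1) x := by
  have h : ∀ i, x i * esymm n j (Function.update x i 0) =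
      ∑ s ∈ Finset.powersetCard (j + 1) (Finset.univ : Finset (Fin n)),
        if i ∈ s then ∏ l ∈ s, x l else 0 := by
    intro i
    have h1 := esymm_succ_eq j x i
    have h2 : x i * esymm n j (Function.update x i 0) =
      esymm n (j + 1) x - esymm n (j + 1) (Function.update x i 0) := by linarith
    rw [h2, esymm, esymm, ← Finset.sum_sub_distrib]
    refine Finset.sum_congr rfl fun s _ => ?_
    rw [prod_update_zero]
    split_ifs <;> simp
  rw [Finset.sum_congr rfl fun i _ => h i, Finset.sum_comm, esymm, Finset.mul_sum]
  refine Finset.sum_congr rfl fun s hs => ?_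
  rw [Finset.sum_ite_mem, Finset.univ_inter, Finset.sum_const, (Finset.mem_powersetCard.1 hs).2]
  simp

lemma esymm_smul {n : ℕ} (j : ℕ) (c : ℝ) (x : Fin n → ℝ) :
    esymm n j (c • x) = c ^ j * esymm n j x := by
  rw [esymm, esymm, Finset.mul_sum]
  refine Finset.sum_congr rfl fun s hs => ?_
  simp [Finset.prod_mul_distrib, (Finset.mem_powersetCard.1 hs).2]

lemma continuous_esymm (n j : ℕ) : Continuous (esymm n j) := by
  unfold esymm
  fun_prop

lemma esymm_pos {n j : ℕ} (hj : j ≤ n) {x : Fin n → ℝ} (hx : ∀ i, 0 < x i) :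
    0 < esymm n j x := by
  refine Finset.sum_pos (fun s _ => Finset.prod_pos fun i _ => hx i) ?_
  rw [Finset.powersetCard_nonempty]
  simpa using hj

lemma le_of_esymm_pos {n j : ℕ} {x : Fin n → ℝ} (h : 0 < esymm n j x) : j ≤ n := by
  by_contra hj
  rw [esymm, Finset.powersetCard_eq_empty.2 (by simpa using hj)] at h
  simp at h

lemma update_zero_add_single {n : ℕ} (x : Fin n → ℝ) (i : Fin n) (s : ℝ) :
    Function.update (x + s • Pi.single i (1 : ℝ)) i 0 = Function.update x i 0 := by
  ext l
  by_cases h : l = i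
  · subst h; simp
  · simp [h]

lemma esymm_add_single {n : ℕ} (j : ℕ) (x : Fin n → ℝ) (i : Fin n) (s : ℝ) :
    esymm n (j + 1) (x + s • Pi.single i (1 : ℝ)) =
      esymm n (j + 1) x + s * esymm n j (Function.update x i 0) := by
  rw [esymm_succ_eq j _ i, update_zero_add_single, esymm_succ_eq j x i]
  simp
  ring

/-! ### Quotients of consecutive elementary symmetric functions -/

lemma mem_GammaCone_pos {n m : ℕ} {x : Fin n → ℝ} (hx : x ∈ GammaCone n m) {j : ℕ}
    (hj : j ≤ m) : 0 < esymm n j x := by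
  rcases Nat.eq_zero_or_pos j with rfl | h
  · simp [esymm_zero]
  · exact hx j h hj

lemma GammaCone_succ_subset (n m : ℕ) : GammaCone n (m + 1) ⊆ GammaCone n m :=
  fun _ hx j h1 h2 => hx j h1 (h2.trans m.le_succ)

/-- The quotient `q_{m+1} = σ_{m+1} / σ_m`; note the index shift. -/
noncomputable def esymmQuot (n m : ℕ) (x : Fin n → ℝ) : ℝ :=
  esymm n (m + 1) x / esymm n m x

lemma GammaCone_succ (n m : ℕ) :
    GammaCone n (m + 1) = {x ∈ GammaCone n m | 0 < esymmQuot n m x} := by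
  ext x
  constructor
  · intro hx
    exact ⟨GammaCone_succ_subset n m hx,
      div_pos (mem_GammaCone_pos hx le_rfl) (mem_GammaCone_pos hx m.le_succ)⟩
  · rintro ⟨hx, hq⟩ j h1 h2
    rcases Nat.of_le_succ h2 with h | rfl
    · exact hx j h1 h
    · exact (div_pos_iff_of_pos_right (mem_GammaCone_pos hx le_rfl)).1 hq

lemma sq_div_convex {a a' b b' p q : ℝ} (hb : 0 < b) (hb' : 0 < b') (hp : 0 ≤ p) (hq : 0 ≤ q)
    (hpq : p + q = 1) :
    (p * a + q * a') ^ 2 / (p * b + q * b') ≤ p * (a ^ 2 / b) + q * (a' ^ 2 / b') := by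
  have hB : 0 < p * b + q * b' := by
    rcases hp.eq_or_lt with rfl | hp
    · have : q = 1 := by linarith
      subst this; simpa using hb'
    · have := mul_pos hp hb
      have := mul_nonneg hq hb'.le
      linarith
  rw [div_le_iff₀ hB]
  have : (p * (a ^ 2 / b) + q * (a' ^ 2 / b')) * (p * b + q * b') - (p * a + q * a') ^ 2
      = p * q * (a * b' - a' * b) ^ 2 / (b * b') := by
    field_simp
    ring
  have h2 : 0 ≤ p * q * (a * b' - a' * b) ^ 2 / (b * b') := by positivity
  linarith

/-- The Marcus–Lopes recursion, expressing `q_{m+2}` through `q_{m+1}` at the points obtained by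
deleting one coordinate. -/
lemma esymmQuot_rec {n m : ℕ} {x : Fin n → ℝ} (hx : 0 < esymm n (m + 1) x)
    (hi : ∀ i, 0 < esymm n m (Function.update x i 0)) :
    esymmQuot n (m + 1) x = (1 / ((m : ℝ) + 2)) *
      (∑ i, (x i - x i ^ 2 / (x i + esymmQuot n m (Function.update x i 0)))) := by
  have h1 : ∀ i, x i - x i ^ 2 / (x i + esymmQuot n m (Function.update x i 0)) =
      x i * esymm n (m + 1) (Function.update x i 0) / esymm n (m + 1) x := by
    intro i
    have h := esymm_succ_eq m x i
    have hi' := hi i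
    have h2 : x i + esymmQuot n m (Function.update x i 0) =
        esymm n (m + 1) x / esymm n m (Function.update x i 0) := by
      rw [h, esymmQuot]; field_simp; ring
    rw [h2]
    have h3 : esymm n (m + 1) (Function.update x i 0) =
      esymm n (m + 1) x - x i * esymm n m (Function.update x i 0) := by linarith
    rw [h3]
    field_simp
  rw [Finset.sum_congr rfl fun i _ => h1 i, ← Finset.sum_div, sum_mul_esymm, esymmQuot]
  push_cast
  have : (m : ℝ) + 1 + 1 ≠ 0 := by positivity
  field_simp
  ring

lemma add_esymmQuot_pos {n m : ℕ} {x : Fin n → ℝ} (hx : 0 < esymm n (m + 1) x) (i : Fin n)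
    (hi : 0 < esymm n m (Function.update x i 0)) :
    0 < x i + esymmQuot n m (Function.update x i 0) := by
  have h2 : x i + esymmQuot n m (Function.update x i 0) =
      esymm n (m + 1) x / esymm n m (Function.update x i 0) := by
    rw [esymm_succ_eq m x i, esymmQuot]; field_simp; ring
  rw [h2]
  exact div_pos hx hi

lemma update_zero_combo {n : ℕ} (x y : Fin n → ℝ) (i : Fin n) (p q : ℝ) :
    Function.update (p • x + q • y) i 0 =
      p • Function.update x i 0 + q • Function.update y i 0 := by
  ext l
  by_cases h : l = i
  · subst h; simp
  · simp [h]

lemma concaveOn_esymmQuot_succ {n m : ℕ} (hc : ConcaveOn ℝ (GammaCone n m) (esymmQuot n m))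
    (hd : ∀ x ∈ GammaCone n (m + 1), ∀ i, Function.update x i 0 ∈ GammaCone n m) :
    ConcaveOn ℝ (GammaCone n (m + 1)) (esymmQuot n (m + 1)) := by
  have hconv : Convex ℝ (GammaCone n (m + 1)) := by
    rw [GammaCone_succ]; exact hc.convex_gt 0
  refine ⟨hconv, fun x hx y hy p q hp hq hpq => ?_⟩
  have hz := hconv hx hy hp hq hpq
  have key : ∀ z ∈ GammaCone n (m + 1), esymmQuot n (m + 1) z = (1 / ((m : ℝ) + 2)) *
      (∑ i, (z i - z i ^ 2 / (z i + esymmQuot n m (Function.update z i 0)))) := fun z hz =>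
    esymmQuot_rec (mem_GammaCone_pos hz le_rfl) fun i => mem_GammaCone_pos (hd z hz i) le_rfl
  have pos : ∀ z ∈ GammaCone n (m + 1), ∀ i,
      0 < z i + esymmQuot n m (Function.update z i 0) := fun z hz i =>
    add_esymmQuot_pos (mem_GammaCone_pos hz le_rfl) i (mem_GammaCone_pos (hd z hz i) le_rfl)
  rw [key x hx, key y hy, key _ hz]
  simp only [smul_eq_mul]
  rw [mul_left_comm p, mul_left_comm q, ← mul_add, Finset.mul_sum, Finset.mul_sum,
    ← Finset.sum_add_distrib]
  refine mul_le_mul_of_nonneg_left (Finset.sum_le_sum fun i _ => ?_) (by positivity)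
  have h1 := hc.2 (hd x hx i) (hd y hy i) hp hq hpq
  rw [← update_zero_combo] at h1
  have hB := sq_div_convex (a := x i) (a' := y i) (pos x hx i) (pos y hy i) hp hq hpq
  have hx' := pos x hx i
  have hy' := pos y hy i
  have hB' : 0 < p * (x i + esymmQuot n m (Function.update x i 0)) +
      q * (y i + esymmQuot n m (Function.update y i 0)) := by
    rcases hp.eq_or_lt with rfl | hp
    · have : q = 1 := by linarith
      subst this; simpa using hy'
    · have := mul_pos hp hx'
      have := mul_nonneg hq hy'.le
      linarith
  simp only [smul_eq_mul] at h1
  simp only [Pi.add_apply, Pi.smul_apply, smul_eq_mul]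
  have h2 : (p * x i + q * y i) ^ 2 /
        (p * x i + q * y i + esymmQuot n m (Function.update (p • x + q • y) i 0)) ≤
      (p * x i + q * y i) ^ 2 / (p * (x i + esymmQuot n m (Function.update x i 0)) +
      q * (y i + esymmQuot n m (Function.update y i 0))) :=
    div_le_div_of_nonneg_left (sq_nonneg _) hB' (by linarith)
  linarith

lemma smul_mem_GammaCone {n m : ℕ} {c : ℝ} (hc : 0 < c) {x : Fin n → ℝ}
    (hx : x ∈ GammaCone n m) : c • x ∈ GammaCone n m := fun j h1 h2 => by
  rw [esymm_smul]
  exact mul_pos (pow_pos hc j) (hx j h1 h2)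

lemma esymmQuot_smul {n m : ℕ} {c : ℝ} (hc : 0 < c) (x : Fin n → ℝ) :
    esymmQuot n m (c • x) = c * esymmQuot n m x := by
  rw [esymmQuot, esymmQuot, esymm_smul, esymm_smul, pow_succ]
  field_simp

/-- A concave function that is homogeneous of degree one on a cone is superadditive there. -/
lemma esymmQuot_superadd {n m : ℕ} (hc : ConcaveOn ℝ (GammaCone n m) (esymmQuot n m))
    {x y : Fin n → ℝ} (hx : x ∈ GammaCone n m) (hy : y ∈ GammaCone n m) :
    x + y ∈ GammaCone n m ∧ esymmQuot n m x + esymmQuot n m y ≤ esymmQuot n m (x + y) := by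
  have hx2 := smul_mem_GammaCone (c := 2) two_pos hx
  have hy2 := smul_mem_GammaCone (c := 2) two_pos hy
  have e : (1 / 2 : ℝ) • (2 : ℝ) • x + (1 / 2 : ℝ) • (2 : ℝ) • y = x + y := by
    simp [smul_smul]
  have h1 := hc.1 hx2 hy2 (by norm_num : (0 : ℝ) ≤ 1 / 2) (by norm_num : (0 : ℝ) ≤ 1 / 2)
    (by norm_num)
  have h2 := hc.2 hx2 hy2 (by norm_num : (0 : ℝ) ≤ 1 / 2) (by norm_num : (0 : ℝ) ≤ 1 / 2)
    (by norm_num)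
  rw [e] at h1 h2
  rw [esymmQuot_smul two_pos, esymmQuot_smul two_pos] at h2
  simp only [smul_eq_mul] at h2
  exact ⟨h1, by linarith⟩

/-- On `Γ_{m+1}` the quotient `q_{m+1}` does not decrease when a coordinate is increased (stated with
denominators cleared). The direction `e_i` is only in the closure of the cone, so it is
approximated by positive vectors. -/
lemma esymmQuot_mono_single {n m : ℕ} (hc : ConcaveOn ℝ (GammaCone n m) (esymmQuot n m))
    {x : Fin n → ℝ} (hx : x ∈ GammaCone n (m + 1)) (i : Fin n) {s : ℝ} (hs : 0 ≤ s) :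
    esymm n (m + 1) x * esymm n m (x + s • Pi.single i (1 : ℝ)) ≤
      esymm n (m + 1) (x + s • Pi.single i (1 : ℝ)) * esymm n m x := by
  have hmn : m + 1 ≤ n := le_of_esymm_pos (mem_GammaCone_pos hx le_rfl)
  have hxm := GammaCone_succ_subset n m hx
  let w : ℝ → Fin n → ℝ := fun ε => s • Pi.single i (1 : ℝ) + fun _ => ε
  have hw : Continuous w := by fun_prop
  have hev : ∀ ε ∈ Set.Ioi (0 : ℝ), esymm n (m + 1) x * esymm n m (x + w ε) ≤
      esymm n (m + 1) (x + w ε) * esymm n m x := by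
    intro ε hε
    have hpos : ∀ l, 0 < w ε l := by
      intro l
      have h0 : 0 ≤ (Pi.single i (1 : ℝ) : Fin n → ℝ) l := by
        by_cases h : l = i
        · subst h; simp
        · simp [h]
      have := mul_nonneg hs h0
      have hε' : 0 < ε := hε
      simp only [w, Pi.add_apply, Pi.smul_apply, smul_eq_mul]
      linarith
    have hwm : w ε ∈ GammaCone n m := fun j _ h2 => esymm_pos (by omega) hpos
    obtain ⟨h1, h2⟩ := esymmQuot_superadd hc hxm hwm
    have h3 : 0 < esymmQuot n m (w ε) :=
      div_pos (esymm_pos hmn hpos) (esymm_pos (by omega) hpos)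
    have h4 : esymmQuot n m x ≤ esymmQuot n m (x + w ε) := by linarith
    rw [esymmQuot, esymmQuot, div_le_div_iff₀ (mem_GammaCone_pos hxm le_rfl)
      (mem_GammaCone_pos h1 le_rfl)] at h4
    exact h4
  have hw0 : w 0 = s • Pi.single i (1 : ℝ) := by
    ext l; simp [w]
  rw [← hw0]
  have c1 := continuous_esymm n m
  have c2 := continuous_esymm n (m + 1)
  refine ContinuousWithinAt.closure_le (s := Set.Ioi (0 : ℝ)) (x := (0 : ℝ))
    (f := fun ε => esymm n (m + 1) x * esymm n m (x + w ε))
    (g := fun ε => esymm n (m + 1) (x + w ε) * esymm n m x) ?_ ?_ ?_ hev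
  · simp
  · exact Continuous.continuousWithinAt (by fun_prop)
  · exact Continuous.continuousWithinAt (by fun_prop)

lemma le_of_forall_affine_le {A B C D : ℝ} (h : ∀ s : ℝ, 0 ≤ s → A + s * B ≤ C + s * D) :
    B ≤ D := by
  by_contra hlt
  push Not at hlt
  have hd : 0 < B - D := by linarith
  have h1 := h ((|C - A| + 1) / (B - D)) (by positivity)
  have h2 : (|C - A| + 1) / (B - D) * (B - D) = |C - A| + 1 := by field_simp
  have h3 := le_abs_self (C - A)
  nlinarith

/-- The simultaneous induction: concavity of `q_{m+1}` on `Γ_m`, and stability of the cones under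
deleting a coordinate (at the cost of one level). -/
lemma concaveOn_and_delete (n m : ℕ) :
    ConcaveOn ℝ (GammaCone n m) (esymmQuot n m) ∧
      ∀ x ∈ GammaCone n (m + 1), ∀ i, Function.update x i 0 ∈ GammaCone n m := by
  induction m with
  | zero =>
    have hu : GammaCone n 0 = Set.univ := by
      ext x; simp only [GammaCone, Set.mem_ofPred_eq, Set.mem_univ, iff_true]; intro j h1 h2; omega
    refine ⟨?_, fun x _ i => by simp [hu]⟩
    have hq : ∀ x, esymmQuot n 0 x = ∑ i, x i := by
      intro x
      have := sum_mul_esymm 0 x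
      simp only [esymm_zero] at this
      simp only [esymmQuot, esymm_zero]
      simpa using this.symm
    rw [hu]
    refine ⟨convex_univ, fun x _ y _ p q _ _ _ => le_of_eq ?_⟩
    simp [hq, Finset.mul_sum, Finset.sum_add_distrib]
  | succ m ih =>
    obtain ⟨hc, hd⟩ := ih
    have hc' := concaveOn_esymmQuot_succ hc hd
    refine ⟨hc', fun x hx i => ?_⟩
    have hx1 := GammaCone_succ_subset n (m + 1) hx
    have hxi := hd x hx1 i
    intro j h1 h2
    rcases Nat.of_le_succ h2 with h | rfl
    · exact hxi j h1 h
    -- Both sides of the monotonicity inequality are affine in the increment `s`; compare slopes.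
    have hs : esymm n (m + 2) x * esymm n m (Function.update x i 0) ≤
        esymm n (m + 1) (Function.update x i 0) * esymm n (m + 1) x := by
      refine le_of_forall_affine_le (A := esymm n (m + 2) x * esymm n (m + 1) x)
        (C := esymm n (m + 2) x * esymm n (m + 1) x) fun s hs => ?_
      have := esymmQuot_mono_single hc' hx i hs
      rw [esymm_add_single, esymm_add_single] at this
      linarith
    have hp := mul_pos (mem_GammaCone_pos hx le_rfl) (mem_GammaCone_pos hxi le_rfl)
    exact (pos_iff_pos_of_mul_pos (lt_of_lt_of_le hp hs)).2 (mem_GammaCone_pos hx1 le_rfl)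

/-! ### Geometric means -/

lemma esymm_eq_prod_esymmQuot {n m : ℕ} {x : Fin n → ℝ} (hx : x ∈ GammaCone n m) :
    esymm n m x = ∏ j ∈ Finset.range m, esymmQuot n j x := by
  induction m with
  | zero => simp [esymm_zero]
  | succ m ih =>
    have hx' := GammaCone_succ_subset n m hx
    rw [Finset.prod_range_succ, ← ih hx', esymmQuot]
    have := mem_GammaCone_pos hx' le_rfl
    field_simp

/-- Superadditivity of the geometric mean, from the AM–GM inequality applied to the ratios
`a j / c j` and `b j / c j`. -/
lemma geom_mean_superadd {m : ℕ} (hm : 1 ≤ m) {a b c : ℕ → ℝ}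
    (ha : ∀ j ∈ Finset.range m, 0 ≤ a j) (hb : ∀ j ∈ Finset.range m, 0 ≤ b j)
    (hcpos : ∀ j ∈ Finset.range m, 0 < c j)
    (hc : ∀ j ∈ Finset.range m, a j + b j ≤ c j) :
    (∏ j ∈ Finset.range m, a j) ^ ((1 : ℝ) / m) + (∏ j ∈ Finset.range m, b j) ^ ((1 : ℝ) / m) ≤
      (∏ j ∈ Finset.range m, c j) ^ ((1 : ℝ) / m) := by
  have hm0 : (0 : ℝ) < m := by exact_mod_cast hm
  have amgm : ∀ d : ℕ → ℝ, (∀ j ∈ Finset.range m, 0 ≤ d j) →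
      (∏ j ∈ Finset.range m, d j) ^ ((1 : ℝ) / m) ≤
        (∏ j ∈ Finset.range m, c j) ^ ((1 : ℝ) / m) *
          ∑ j ∈ Finset.range m, (1 : ℝ) / m * (d j / c j) := by
    intro d hd
    have hr : ∀ j ∈ Finset.range m, 0 ≤ d j / c j := fun j hj =>
      div_nonneg (hd j hj) (hcpos j hj).le
    have h := Real.geom_mean_le_arith_mean_weighted (Finset.range m) (fun _ => (1 : ℝ) / m)
      (fun j => d j / c j) (fun _ _ => by positivity) (by simp; field_simp) hr
    rw [Real.finsetProd_rpow _ _ hr] at h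
    have hsplit : ∏ j ∈ Finset.range m, d j =
        (∏ j ∈ Finset.range m, c j) * ∏ j ∈ Finset.range m, d j / c j := by
      rw [← Finset.prod_mul_distrib]
      refine Finset.prod_congr rfl fun j hj => ?_
      have := hcpos j hj
      field_simp
    have hC := Finset.prod_nonneg fun j hj => (hcpos j hj).le
    rw [hsplit, Real.mul_rpow hC (Finset.prod_nonneg hr)]
    exact mul_le_mul_of_nonneg_left h (Real.rpow_nonneg hC _)
  have hC := Real.rpow_nonneg (Finset.prod_nonneg fun j hj => (hcpos j hj).le) ((1 : ℝ) / m)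
  refine (add_le_add (amgm a ha) (amgm b hb)).trans ?_
  rw [← mul_add, ← Finset.sum_add_distrib]
  refine mul_le_of_le_one_right hC ?_
  calc _ ≤ ∑ j ∈ Finset.range m, (1 : ℝ) / m := by
        refine Finset.sum_le_sum fun j hj => ?_
        rw [← mul_add, ← add_div]
        exact mul_le_of_le_one_right (by positivity) ((div_le_one (hcpos j hj)).2 (hc j hj))
    _ = 1 := by simp; field_simp

/-- For every n ≥ 1 and 1 ≤ m ≤ n, the function
g_m(k) := (σ_m(k))^{1/m} is concave on the convex cone Γ_m. -/
theorem stmt_9 (n m : ℕ) (hn : 1 ≤ n) (hm : 1 ≤ m) (hmn : m ≤ n) :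
    ConcaveOn ℝ (GammaCone n m)
      (fun k => (esymm n m k) ^ ((1 : ℝ) / m)) := by
  have hconv : Convex ℝ (GammaCone n m) := (concaveOn_and_delete n m).1.1
  have hsub : ∀ j ≤ m, GammaCone n m ⊆ GammaCone n j := fun j hj x hx l h1 h2 =>
    hx l h1 (h2.trans hj)
  have hqpos : ∀ x ∈ GammaCone n m, ∀ j ∈ Finset.range m, 0 < esymmQuot n j x := by
    intro x hx j hj
    have := Finset.mem_range.1 hj
    exact div_pos (mem_GammaCone_pos hx (by omega)) (mem_GammaCone_pos hx (by omega))
  refine ⟨hconv, fun x hx y hy p q hp hq hpq => ?_⟩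
  have hz := hconv hx hy hp hq hpq
  have hm0 : (m : ℝ) ≠ 0 := by positivity
  -- A nonnegative scalar passes inside the geometric mean.
  have hscale : ∀ r : ℝ, 0 ≤ r → ∀ u ∈ GammaCone n m,
      r * (esymm n m u) ^ ((1 : ℝ) / m) =
        (∏ j ∈ Finset.range m, r * esymmQuot n j u) ^ ((1 : ℝ) / m) := by
    intro r hr u hu
    rw [Finset.prod_mul_distrib, ← esymm_eq_prod_esymmQuot hu, Finset.prod_const,
      Finset.card_range, Real.mul_rpow (pow_nonneg hr m) (mem_GammaCone_pos hu le_rfl).le,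
      ← Real.rpow_natCast, ← Real.rpow_mul hr, mul_one_div_cancel hm0, Real.rpow_one]
  simp only [smul_eq_mul]
  rw [hscale p hp x hx, hscale q hq y hy, esymm_eq_prod_esymmQuot hz]
  refine geom_mean_superadd hm (fun j hj => mul_nonneg hp (hqpos x hx j hj).le)
    (fun j hj => mul_nonneg hq (hqpos y hy j hj).le) (hqpos _ hz) fun j hj => ?_
  have hjm := (Finset.mem_range.1 hj).le
  exact (concaveOn_and_delete n j).1.2 (hsub j hjm hx) (hsub j hjm hy) hp hq hpq
end

section
/- For every n ≥ 1, every 1 ≤ m ≤ n, every k ∈ Γ_m, and every index 1 ≤ i ≤ n, the partial derivative of g_m := (σ_m)^{1/m} with respect to k_i at k is strictly positive; explicitly, ∂g_m/∂k_i (k) = (1/m) σ_m(k)^{(1/m) − 1} · ∂σ_m/∂k_i (k) > 0. -/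
open Polynomial in
/-- By Rolle's theorem, differentiation preserves real-rootedness. -/
lemma splits_derivative_real {p : ℝ[X]} (hp : p.Splits) : (derivative p).Splits := by
  rw [splits_iff_card_roots] at hp ⊢
  have h1 := card_roots_le_derivative p
  have h2 := natDegree_derivative_le p
  have h3 := card_roots' (derivative p)
  omega

open Polynomial in
/-- The inequality `p'(0) ^ 2 ≥ p(0) p''(0)` for a real-rooted polynomial `p`. -/
lemma newton_coeff_zero {p : ℝ[X]} (hp : p.Splits) :
    2 * (p.coeff 0 * p.coeff 2) ≤ p.coeff 1 ^ 2 := by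
  obtain ⟨s, hs⟩ := splits_iff_exists_multiset.1 hp
  rw [hs]
  generalize p.leadingCoeff = a
  clear hs hp
  induction s using Multiset.induction_on with
  | empty => simp [coeff_C]
  | cons r s ih =>
    rw [Multiset.map_cons, Multiset.prod_cons, mul_left_comm (C a)]
    generalize C a * (s.map fun a => X - C a).prod = q at ih
    have h0 : ((X - C r) * q).coeff 0 = -r * q.coeff 0 := by simp [sub_mul]
    have h1 : ((X - C r) * q).coeff 1 = q.coeff 0 - r * q.coeff 1 := by
      simp [sub_mul, coeff_X_mul q 0]
    have h2 : ((X - C r) * q).coeff 2 = q.coeff 1 - r * q.coeff 2 := by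
      simp [sub_mul, coeff_X_mul q 1]
    rw [h0, h1, h2]
    nlinarith [mul_nonneg (sq_nonneg r) (sub_nonneg.2 ih), sq_nonneg (q.coeff 0)]

open Polynomial in
/-- Newton's inequality for the coefficients of a real-rooted polynomial. -/
lemma newton_coeff (j : ℕ) {p : ℝ[X]} (hp : p.Splits) :
    (j + 2 : ℝ) * (p.coeff j * p.coeff (j + 2)) ≤ (j + 1) * p.coeff (j + 1) ^ 2 := by
  have hs : (derivative^[j] p).Splits := by
    induction j with
    | zero => exact hp
    | succ j ih => rw [Function.iterate_succ_apply']; exact splits_derivative_real ih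
  have h := newton_coeff_zero hs
  simp only [coeff_iterate_derivative, nsmul_eq_mul] at h
  have f0 : ((0 + j).descFactorial j : ℝ) = j.factorial := by
    rw [zero_add, Nat.descFactorial_self]
  have f1 : ((1 + j).descFactorial j : ℝ) = (j + 1) * j.factorial := by
    have := Nat.factorial_mul_descFactorial (show j ≤ 1 + j by omega)
    rw [Nat.add_sub_cancel, Nat.factorial_one, one_mul, add_comm 1 j] at this
    rw [add_comm 1 j, this, Nat.factorial_succ]; push_cast; ring
  have f2 : 2 * ((2 + j).descFactorial j : ℝ) = (j + 2) * ((j + 1) * j.factorial) := by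
    have := Nat.factorial_mul_descFactorial (show j ≤ 2 + j by omega)
    rw [Nat.add_sub_cancel, Nat.factorial_two, add_comm 2 j] at this
    rw [add_comm 2 j]
    have h' : (2 * ((j + 2).descFactorial j : ℝ)) = ((j + 2).factorial : ℝ) := by
      exact_mod_cast this
    rw [h', Nat.factorial_succ, Nat.factorial_succ]; push_cast; ring
  rw [f0, f1, zero_add, add_comm 1 j, add_comm 2 j] at h
  rw [add_comm 2 j] at f2
  have hf : (0 : ℝ) < j.factorial := by exact_mod_cast j.factorial_pos
  have hc : (0 : ℝ) < (j + 1) * j.factorial ^ 2 := by positivity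
  refine le_of_mul_le_mul_left ?_ hc
  calc _ = 2 * (j.factorial * p.coeff j *
        (((j + 2).descFactorial j : ℝ) * p.coeff (j + 2))) := by
        linear_combination (-(j.factorial * p.coeff j * p.coeff (j + 2))) * f2
    _ ≤ _ := h
    _ = _ := by ring

open Polynomial in
/-- The generating polynomial `∏_{l ∈ s} (1 + k_l X)`, whose `j`-th coefficient is the `j`-th
elementary symmetric function of the `k_l`, `l ∈ s`. -/
noncomputable def genPoly {n : ℕ} (s : Finset (Fin n)) (k : Fin n → ℝ) : ℝ[X] :=
  ∏ l ∈ s, (1 + C (k l) * X)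

open Polynomial in
lemma genPoly_splits {n : ℕ} (s : Finset (Fin n)) (k : Fin n → ℝ) : (genPoly s k).Splits := by
  refine Splits.prod fun l _ => Splits.of_natDegree_le_one ?_
  compute_degree

open Polynomial in
lemma esymm_eq_coeff (n j : ℕ) (k : Fin n → ℝ) :
    esymm n j k = (genPoly Finset.univ k).coeff j := by
  rw [genPoly, Finset.prod_one_add, finsetSum_coeff, esymm,
    Finset.powersetCard_eq_filter, Finset.sum_filter]
  refine Finset.sum_congr rfl fun t _ => ?_
  rw [Finset.prod_mul_distrib, Finset.prod_const, ← map_prod, coeff_C_mul_X_pow]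
  simp only [eq_comm]

open Polynomial in
lemma esymm_succ (n j : ℕ) (k : Fin n → ℝ) (i : Fin n) :
    esymm n (j + 1) k = (genPoly (Finset.univ.erase i) k).coeff (j + 1) +
      k i * (genPoly (Finset.univ.erase i) k).coeff j := by
  rw [esymm_eq_coeff, genPoly, ← Finset.mul_prod_erase _ _ (Finset.mem_univ i), ← genPoly,
    add_mul, one_mul, coeff_add, mul_assoc, coeff_C_mul, coeff_X_mul]

lemma genPoly_coeff_pos {n m : ℕ} {k : Fin n → ℝ} (hk : k ∈ GammaCone n m) (i : Fin n) (j : ℕ)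
    (hj : j < m) : 0 < (genPoly (Finset.univ.erase i) k).coeff j := by
  induction j with
  | zero => simp [genPoly, Polynomial.coeff_zero_prod]
  | succ j ih =>
    have a := ih (by omega)
    have s1 := hk (j + 1) (by omega) (by omega)
    have s2 := hk (j + 2) (by omega) (by omega)
    have hN := newton_coeff j (genPoly_splits (Finset.univ.erase i) k)
    rw [esymm_succ n _ k i] at s1 s2
    generalize (genPoly (Finset.univ.erase i) k).coeff j = x at *
    generalize (genPoly (Finset.univ.erase i) k).coeff (j + 1) = y at *
    rw [show j + 1 + 1 = j + 2 from rfl] at s2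
    generalize (genPoly (Finset.univ.erase i) k).coeff (j + 2) = z at *
    by_contra! hy
    have h1 : 0 ≤ (y + k i * x) * (-y) := mul_nonneg s1.le (by linarith)
    have h2 : 0 < x * (z + k i * y) := mul_pos a s2
    have h3 : y ^ 2 < x * z := by nlinarith
    have h4 : (0 : ℝ) ≤ j := j.cast_nonneg
    nlinarith [sq_nonneg y]

lemma esymm_differentiable (n m : ℕ) : Differentiable ℝ (esymm n m) := by
  unfold esymm
  fun_prop

lemma fderiv_esymm_single (n j : ℕ) (k : Fin n → ℝ) (i : Fin n) :
    fderiv ℝ (esymm n (j + 1)) k (Pi.single i 1) =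
      (genPoly (Finset.univ.erase i) k).coeff j := by
  rw [← (esymm_differentiable n (j + 1) k).lineDeriv_eq_fderiv, lineDeriv]
  -- Along the line `k + t e_i` only `k_i` moves, so `σ_{j+1}` is affine in `t`.
  have h : (fun t : ℝ => esymm n (j + 1) (k + t • Pi.single i 1)) = fun t =>
      (genPoly (Finset.univ.erase i) k).coeff (j + 1) +
        (k i + t) * (genPoly (Finset.univ.erase i) k).coeff j := by
    funext t
    have hg : genPoly (Finset.univ.erase i) (k + t • Pi.single i 1) =
        genPoly (Finset.univ.erase i) k := by
      refine Finset.prod_congr rfl fun l hl => ?_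
      simp [Finset.ne_of_mem_erase hl]
    rw [esymm_succ n j _ i, hg]
    simp
  rw [h]
  simp

/-- For every n ≥ 1, 1 ≤ m ≤ n, k ∈ Γ_m and every index i, the
partial derivative of g_m := (σ_m)^{1/m} with respect to k_i at k is strictly
positive; explicitly it equals (1/m) σ_m(k)^{1/m − 1} · ∂σ_m/∂k_i(k) > 0. -/
theorem stmt_10 (n m : ℕ) (hn : 1 ≤ n) (hm : 1 ≤ m) (hmn : m ≤ n)
    (k : Fin n → ℝ) (hk : k ∈ GammaCone n m) (i : Fin n) :
    fderiv ℝ (fun k => (esymm n m k) ^ ((1 : ℝ) / m)) k (Pi.single i 1) =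
      (1 / m : ℝ) * (esymm n m k) ^ ((1 : ℝ) / m - 1) *
        fderiv ℝ (esymm n m) k (Pi.single i 1) ∧
    0 < fderiv ℝ (fun k => (esymm n m k) ^ ((1 : ℝ) / m)) k (Pi.single i 1) := by
  have hpos : 0 < esymm n m k := hk m hm le_rfl
  have hd := (esymm_differentiable n m k).hasFDerivAt.rpow_const (p := (1 : ℝ) / m)
    (Or.inl hpos.ne')
  have heq : fderiv ℝ (fun k => (esymm n m k) ^ ((1 : ℝ) / m)) k (Pi.single i 1) =
      (1 / m : ℝ) * (esymm n m k) ^ ((1 : ℝ) / m - 1) *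
        fderiv ℝ (esymm n m) k (Pi.single i 1) := by
    rw [hd.fderiv]
    simp
  refine ⟨heq, heq ▸ ?_⟩
  have hm0 : (0 : ℝ) < m := by exact_mod_cast hm
  have hder : 0 < fderiv ℝ (esymm n m) k (Pi.single i 1) := by
    obtain ⟨j, rfl⟩ : ∃ j, m = j + 1 := ⟨m - 1, by omega⟩
    rw [fderiv_esymm_single]
    exact genPoly_coeff_pos hk i j (by omega)
  positivity
end
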